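/- arXiv:2109.14849 — 2 statements merged into one kernel-verified Lean document; each statement's English description precedes it below -/
import Mathlib

section
/- Let Φ : ℝ → ℝ be a lower semi-continuous function and a, b positive reals. Fix x ∈ ℝ and t > 0, and define V(x,t) := inf over u ∈ [x−at, x+bt] of {V(x,t; u,a,b) + Φ(u)}. Then: (i) this infimum is attained at some u* ∈ [x−at, x+bt]; (ii) for any such minimizer u*, the trajectory s ↦ γ(s; x,t,u*,a,b) minimizes the cost ∫₀ᵗ y(s)²/2 ds + Φ(y(0)) over all Lipschitz functions y : [0,t] → ℝ with y(t) = x and y'(s) ∈ [−b,a] for almost every s ∈ (0,t), and the minimal cost equals V(x,t); (iii) if moreover Φ is convex, this optimal trajectory is unique. -/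
/-!
Fix the endpoints: `u` at time `0` and `x` at time `t`. A Lipschitz path with derivative in
`[-b, a]` almost everywhere is the same thing as a path whose difference quotients lie in `[-b, a]`
(`ctrlFeasible.slopeBdd`, `SlopeBdd.ctrlFeasible`). Such a path satisfies
`max (u - b s) (x - a (t - s)) ≤ y s ≤ min (u + a s) (x + b (t - s))` at every time `s`. The
pointwise projection of `0` onto this interval, `clampPath`, is itself admissible, because slope
bounds are preserved by maxima and minima. It therefore minimizes `|y s|` simultaneously for all
`s`, hence also the running cost `∫ y² / 2` (`clampCost_le`).

On each of the regions Ω₁, Ω₂, Ω₃ the projection is exactly the broken line `γ` (`gammaFn_eq`), and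
integrating its affine pieces gives the closed formula for `V` (`Vval_eq`). The problem is thus
reduced to minimizing `V + Φ` over the initial point. As an integral of a continuous function with
parameter, `V` is continuous in `u`, so a minimizer exists by lower semicontinuity of `Φ` and
compactness. For convex `Φ`, uniqueness follows from the strict convexity of `y ↦ ∫ y² / 2`,
applied to the midpoint of two optimal paths (`eqOn_of_cost_eq`).
-/

open Set MeasureTheory Matrix
open scoped Classical

noncomputable section

/-- The set Ω₁, as a predicate on `(x, t, u)`, for velocity-bound parameters `a, b`. -/
def inOmega1 (a b x t u : ℝ) : Prop :=
  0 ≤ u ∧ 0 ≤ t ∧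
    ((t < u / b ∧ u - b * t ≤ x ∧ x ≤ u + a * t) ∨
      (u / b ≤ t ∧ a * t - a * u / b ≤ x ∧ x ≤ u + a * t))

/-- The set Ω₂, as a predicate on `(x, t, u)`, for velocity-bound parameters `a, b`. -/
def inOmega2 (a b x t u : ℝ) : Prop :=
  0 ≤ u ∧ 0 ≤ t ∧ u / b ≤ t ∧ 0 ≤ x ∧ x < a * t - a * u / b

/-- The set Ω₃, as a predicate on `(x, t, u)`, for velocity-bound parameters `a, b`. -/
def inOmega3 (a b x t u : ℝ) : Prop :=
  0 ≤ u ∧ 0 ≤ t ∧ u / b ≤ t ∧ u - b * t ≤ x ∧ x < 0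

/-- The value of `V` on Ω₁. -/
def V1fun (a b x t u : ℝ) : ℝ :=
  u ^ 3 / (6 * b) + x ^ 3 / (6 * a) -
    (1 / (6 * a) + 1 / (6 * b)) * ((a * u + b * x - a * b * t) / (a + b)) ^ 3

/-- The value of `V` on Ω₂. -/
def V2fun (a b x t u : ℝ) : ℝ := u ^ 3 / (6 * b) + x ^ 3 / (6 * a)

/-- The value of `V` on Ω₃. -/
def V3fun (a b x t u : ℝ) : ℝ := u ^ 3 / (6 * b) - x ^ 3 / (6 * b)

/-- The extended-real value `V(x,t;u,a,b)` for `u ≥ 0`. -/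
def Vpos (a b x t u : ℝ) : EReal :=
  if inOmega1 a b x t u then (V1fun a b x t u : EReal)
  else if inOmega2 a b x t u then (V2fun a b x t u : EReal)
  else if inOmega3 a b x t u then (V3fun a b x t u : EReal)
  else ⊤

/-- The extended-real value `V(x,t;u,a,b)`; for `u < 0` it is defined by
`V(x,t;u,a,b) := V(-x,t;-u,b,a)`. -/
def Vval (a b x t u : ℝ) : EReal :=
  if 0 ≤ u then Vpos a b x t u else Vpos b a (-x) t (-u)

/-- The trajectory formula on Ω₁. -/
def gamma1 (a b x t u s : ℝ) : ℝ :=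
  if s < (-x + u + a * t) / (a + b) then u - b * s else a * (s - t) + x

/-- The trajectory formula on Ω₂. -/
def gamma2 (a b x t u s : ℝ) : ℝ :=
  if s < u / b then u - b * s else if s < t - x / a then 0 else a * (s - t) + x

/-- The trajectory formula on Ω₃. -/
def gamma3 (a b x t u s : ℝ) : ℝ :=
  if s < u / b then u - b * s else if s < t - |x| / b then 0 else -b * (s - t) + x

/-- The optimal trajectory `γ(s;x,t,u,a,b)` for `u ≥ 0`. -/
def gammaPos (a b x t u s : ℝ) : ℝ :=
  if inOmega1 a b x t u then gamma1 a b x t u s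
  else if inOmega2 a b x t u then gamma2 a b x t u s
  else if inOmega3 a b x t u then gamma3 a b x t u s
  else 0

/-- The optimal trajectory `γ(s;x,t,u,a,b)`; for `u < 0` it is defined by
`γ(s;x,t,u,a,b) := -γ(s;-x,t,-u,b,a)`. -/
def gammaFn (a b x t u s : ℝ) : ℝ :=
  if 0 ≤ u then gammaPos a b x t u s else -gammaPos b a (-x) t (-u) s

/-- One-dimensional feasibility: Lipschitz on `[0,t]` with derivative in `[-b,a]`
almost everywhere on `(0,t)`. -/
def ctrlFeasible (a b t : ℝ) (y : ℝ → ℝ) : Prop :=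
  (∃ K : NNReal, LipschitzOnWith K y (Set.Icc 0 t)) ∧
    ∀ᵐ s ∂(volume : Measure ℝ), s ∈ Set.Ioo 0 t →
      ∃ d ∈ Set.Icc (-b) a, HasDerivAt y d s


/-! ### Admissible trajectories and slope bounds -/

/-- `y` has all difference quotients on `[0, t]` between `-b` and `a`. -/
def SlopeBdd (a b t : ℝ) (y : ℝ → ℝ) : Prop :=
  ∀ s ∈ Icc 0 t, ∀ r ∈ Icc 0 t, s ≤ r → -b * (r - s) ≤ y r - y s ∧ y r - y s ≤ a * (r - s)

lemma SlopeBdd.max {a b t : ℝ} {y z : ℝ → ℝ} (hy : SlopeBdd a b t y) (hz : SlopeBdd a b t z) :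
    SlopeBdd a b t (fun s => max (y s) (z s)) := by
  intro s hs r hr hsr
  have h1 := hy s hs r hr hsr
  have h2 := hz s hs r hr hsr
  simp only
  constructor
  · rcases max_choice (y s) (z s) with h | h <;> rw [h] <;>
      linarith [le_max_left (y r) (z r), le_max_right (y r) (z r)]
  · rcases max_choice (y r) (z r) with h | h <;> rw [h] <;>
      linarith [le_max_left (y s) (z s), le_max_right (y s) (z s)]

lemma SlopeBdd.min {a b t : ℝ} {y z : ℝ → ℝ} (hy : SlopeBdd a b t y) (hz : SlopeBdd a b t z) :
    SlopeBdd a b t (fun s => min (y s) (z s)) := by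
  intro s hs r hr hsr
  have h1 := hy s hs r hr hsr
  have h2 := hz s hs r hr hsr
  simp only
  constructor
  · rcases min_choice (y r) (z r) with h | h <;> rw [h] <;>
      linarith [min_le_left (y s) (z s), min_le_right (y s) (z s)]
  · rcases min_choice (y s) (z s) with h | h <;> rw [h] <;>
      linarith [min_le_left (y r) (z r), min_le_right (y r) (z r)]

lemma slopeBdd_affine {a b t m : ℝ} (c : ℝ) (h1 : -b ≤ m) (h2 : m ≤ a) :
    SlopeBdd a b t (fun s => m * s + c) := by
  intro s _ r _ hsr
  have : m * r + c - (m * s + c) = m * (r - s) := by ring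
  simp only [this]
  exact ⟨mul_le_mul_of_nonneg_right h1 (sub_nonneg.2 hsr),
    mul_le_mul_of_nonneg_right h2 (sub_nonneg.2 hsr)⟩

lemma SlopeBdd.congr {a b t : ℝ} {y z : ℝ → ℝ} (hy : SlopeBdd a b t y)
    (h : ∀ s ∈ Icc 0 t, z s = y s) : SlopeBdd a b t z := by
  intro s hs r hr hsr
  rw [h s hs, h r hr]
  exact hy s hs r hr hsr

/-- A Lipschitz function is the integral of its almost-everywhere derivative, so the pointwise
bounds on the derivative integrate to bounds on the increments. -/
lemma ctrlFeasible.slopeBdd {a b t : ℝ} {y : ℝ → ℝ} (hy : ctrlFeasible a b t y) :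
    SlopeBdd a b t y := by
  obtain ⟨⟨K, hK⟩, hd⟩ := hy
  intro s hs r hr hsr
  have hsub : Icc s r ⊆ Icc 0 t := Icc_subset_Icc hs.1 hr.2
  have hac : AbsolutelyContinuousOnInterval y s r := by
    apply LipschitzOnWith.absolutelyContinuousOnInterval (K := K)
    rw [uIcc_of_le hsr]
    exact hK.mono hsub
  have hint := hac.intervalIntegrable_deriv
  rw [← hac.integral_deriv_eq_sub]
  have hb : ∀ᵐ p ∂(volume.restrict (Icc s r)), -b ≤ deriv y p ∧ deriv y p ≤ a := by
    rw [ae_restrict_iff' measurableSet_Icc]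
    have h0 : ∀ᵐ p ∂(volume : Measure ℝ), p ≠ 0 := by simp [ae_iff]
    have h1 : ∀ᵐ p ∂(volume : Measure ℝ), p ≠ t := by simp [ae_iff]
    filter_upwards [hd, h0, h1] with p hp hp0 hpt hps
    obtain ⟨d, hd1, hd2⟩ := hp ⟨lt_of_le_of_ne (hsub hps).1 hp0.symm,
      lt_of_le_of_ne (hsub hps).2 hpt⟩
    rw [hd2.deriv]
    exact hd1
  constructor
  · have := intervalIntegral.integral_mono_ae_restrict hsr
      (intervalIntegrable_const (c := -b)) hint (hb.mono fun p hp => hp.1)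
    simp only [intervalIntegral.integral_const, smul_eq_mul] at this
    linarith
  · have := intervalIntegral.integral_mono_ae_restrict hsr hint
      (intervalIntegrable_const (c := a)) (hb.mono fun p hp => hp.2)
    simp only [intervalIntegral.integral_const, smul_eq_mul] at this
    linarith

/-- Conversely, bounded increments make `y` Lipschitz, hence almost everywhere differentiable, and
the derivative inherits the bounds as a limit of difference quotients. -/
lemma SlopeBdd.ctrlFeasible {a b t : ℝ} {y : ℝ → ℝ} (hy : SlopeBdd a b t y) :
    ctrlFeasible a b t y := by
  have hlip : LipschitzOnWith (|a| + |b|).toNNReal y (Icc 0 t) := by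
    apply LipschitzOnWith.of_le_add_mul
    intro p hp q hq
    rw [Real.coe_toNNReal _ (by positivity), Real.dist_eq]
    rcases le_total p q with h | h
    · have := (hy p hp q hq h).1
      rw [abs_sub_comm, abs_of_nonneg (sub_nonneg.2 h)]
      nlinarith [le_abs_self b, abs_nonneg a]
    · have := (hy q hq p hp h).2
      rw [abs_of_nonneg (sub_nonneg.2 h)]
      nlinarith [le_abs_self a, abs_nonneg b]
  refine ⟨⟨_, hlip⟩, ?_⟩
  filter_upwards [hlip.ae_differentiableWithinAt_of_mem_real] with s hs hst
  have hd : DifferentiableAt ℝ y s :=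
    (hs (Ioo_subset_Icc_self hst)).differentiableAt (Icc_mem_nhds hst.1 hst.2)
  refine ⟨deriv y s, ?_, hd.hasDerivAt⟩
  have hlim := hd.hasDerivAt.tendsto_slope
  refine isClosed_Icc.mem_of_tendsto hlim ?_
  have hn : ∀ᶠ p in nhdsWithin s {s}ᶜ, p ∈ Ioo 0 t :=
    mem_nhdsWithin_of_mem_nhds (Ioo_mem_nhds hst.1 hst.2)
  filter_upwards [hn, self_mem_nhdsWithin] with p hp hps
  rw [slope_def_field]
  rcases lt_or_gt_of_ne (show p ≠ s from hps) with h | h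
  · have := hy p (Ioo_subset_Icc_self hp) s (Ioo_subset_Icc_self hst) h.le
    rw [mem_Icc, ← neg_sub (y s), ← neg_sub s, neg_div_neg_eq,
      le_div_iff₀ (sub_pos.2 h), div_le_iff₀ (sub_pos.2 h)]
    exact this
  · have := hy s (Ioo_subset_Icc_self hst) p (Ioo_subset_Icc_self hp) h.le
    rw [mem_Icc, le_div_iff₀ (sub_pos.2 h), div_le_iff₀ (sub_pos.2 h)]
    exact this

/-! ### The pointwise minimal trajectory -/

/-- The projection of `0` onto the interval of positions reachable at time `s` by trajectories
going from `u` at time `0` to `x` at time `t`. This reading, and independence of the order of maximum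
and minimum, require `u ∈ [x - a t, x + b t]`, so that the interval is nonempty. -/
def clampPath (a b x t u s : ℝ) : ℝ :=
  max (max (-b * s + u) (a * s + (x - a * t))) (min 0 (min (a * s + u) (-b * s + (x + b * t))))

lemma continuous_clampPath (a b x t : ℝ) :
    Continuous (fun p : ℝ × ℝ => clampPath a b x t p.1 p.2) := by
  unfold clampPath
  fun_prop

lemma continuous_clampPath_right (a b x t u : ℝ) : Continuous (clampPath a b x t u) := by
  unfold clampPath
  fun_prop

lemma slopeBdd_clampPath {a b : ℝ} (ha : 0 < a) (hb : 0 < b) (x t u : ℝ) :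
    SlopeBdd a b t (clampPath a b x t u) := by
  have h0 : SlopeBdd a b t (fun _ => 0) := by
    simpa using slopeBdd_affine (t := t) 0 (neg_nonpos.2 hb.le) ha.le
  exact ((slopeBdd_affine _ le_rfl (by linarith)).max
    (slopeBdd_affine _ (by linarith) le_rfl)).max
    (h0.min ((slopeBdd_affine _ (by linarith) le_rfl).min
      (slopeBdd_affine _ le_rfl (by linarith))))

/-- Reflection `x ↦ -x` exchanges the roles of `a` and `b`. It turns the maximum-of-minimum form of
the projection into a minimum of maxima, which agrees with it because the reachable interval is
nonempty. -/
lemma clampPath_neg {a b x t u s : ℝ} (ha : 0 < a) (hb : 0 < b)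
    (hu : u ∈ Icc (x - a * t) (x + b * t)) (hs : s ∈ Icc 0 t) :
    -clampPath b a (-x) t (-u) s = clampPath a b x t u s := by
  obtain ⟨h1, h2⟩ := hu
  obtain ⟨h3, h4⟩ := hs
  have e1 := mul_nonneg ha.le h3
  have e2 := mul_nonneg hb.le h3
  have e3 := mul_nonneg ha.le (sub_nonneg.2 h4)
  have e4 := mul_nonneg hb.le (sub_nonneg.2 h4)
  unfold clampPath
  grind

/-- Every admissible trajectory stays in the reachable intervals, so the projection of `0` onto them
is at least as close to `0` at every time. -/
lemma abs_clampPath_le {a b x t s : ℝ} {y : ℝ → ℝ} (hy : SlopeBdd a b t y) (hx : y t = x)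
    (hs : s ∈ Icc 0 t) : |clampPath a b x t (y 0) s| ≤ |y s| := by
  have ht : 0 ≤ t := hs.1.trans hs.2
  have h1 := hy 0 ⟨le_rfl, ht⟩ s hs hs.1
  have h2 := hy s hs t ⟨ht, le_rfl⟩ hs.2
  unfold clampPath
  grind

lemma SlopeBdd.mem_Icc {a b x t : ℝ} {y : ℝ → ℝ} (ht : 0 ≤ t) (hy : SlopeBdd a b t y)
    (hx : y t = x) : y 0 ∈ Icc (x - a * t) (x + b * t) := by
  have h := hy 0 ⟨le_rfl, ht⟩ t ⟨ht, le_rfl⟩ ht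
  constructor <;> linarith [h.1, h.2]

lemma clampPath_zero {a b x t u : ℝ} (hu : u ∈ Icc (x - a * t) (x + b * t)) :
    clampPath a b x t u 0 = u := by
  obtain ⟨h1, h2⟩ := hu
  unfold clampPath
  grind

lemma clampPath_end {a b x t u : ℝ} (hu : u ∈ Icc (x - a * t) (x + b * t)) :
    clampPath a b x t u t = x := by
  obtain ⟨h1, h2⟩ := hu
  unfold clampPath
  grind

/-! ### Identification with the broken line `γ` -/

/-- For `0 ≤ u` the feasible `(x, t, u)` fall into three regimes: the descent from `u` meets the
ascent to `x` at a nonnegative height; or the path rests at `0` and then ascends to `x ≥ 0`; or it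
rests at `0` and then descends to `x < 0`. -/
lemma omega_cases {a b x t u : ℝ} (ha : 0 < a) (hb : 0 < b) (ht : 0 < t) (hu0 : 0 ≤ u)
    (hu : u ∈ Icc (x - a * t) (x + b * t)) :
    (inOmega1 a b x t u ∧ 0 ≤ a * u + b * x - a * b * t) ∨
    (¬ inOmega1 a b x t u ∧ inOmega2 a b x t u ∧ 0 ≤ x ∧ u / b ≤ t - x / a) ∨
    (¬ inOmega1 a b x t u ∧ ¬ inOmega2 a b x t u ∧ inOmega3 a b x t u ∧ x < 0 ∧
      u / b ≤ t - |x| / b) := by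
  obtain ⟨h1, h2⟩ := hu
  obtain ⟨v, rfl⟩ : ∃ v, u = b * v := ⟨u / b, by field_simp⟩
  have hv : b * v / b = v := by field_simp
  have hv' : a * (b * v) / b = a * v := by field_simp
  by_cases c1 : inOmega1 a b x t (b * v)
  · refine Or.inl ⟨c1, ?_⟩
    obtain ⟨_, _, h⟩ := c1
    rw [hv, hv'] at h
    rcases h with h | h
    · nlinarith [mul_pos hb (sub_pos.2 h.1), mul_pos ha (mul_pos hb (sub_pos.2 h.1))]
    · nlinarith
  have h5 := c1
  simp only [inOmega1, hv, hv', not_and, not_or, not_le] at h5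
  obtain ⟨h6, h7⟩ := h5 hu0 ht.le
  have h8 : v ≤ t := by
    by_contra! h
    linarith [h6 h (by linarith)]
  have h9 : x < a * t - a * v := by
    by_contra! h
    linarith [h7 h8 h]
  by_cases c2 : inOmega2 a b x t (b * v)
  · refine Or.inr (Or.inl ⟨c1, c2, c2.2.2.2.1, ?_⟩)
    rw [hv, le_sub_comm, div_le_iff₀ ha]
    linarith
  have h10 : x < 0 := by
    by_contra! h
    exact c2 ⟨hu0, ht.le, by rw [hv]; exact h8, h, by rw [hv']; exact h9⟩
  refine Or.inr (Or.inr ⟨c1, c2, ⟨hu0, ht.le, by rw [hv]; exact h8, by linarith, h10⟩, h10, ?_⟩)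
  rw [hv, abs_of_neg h10, le_sub_comm, div_le_iff₀ hb]
  linarith

section
variable {a b x t u s : ℝ}

lemma clampPath_omega1_left (ha : 0 < a) (hb : 0 < b) (h : 0 ≤ a * u + b * x - a * b * t)
    (hs : s ≤ (-x + u + a * t) / (a + b)) : clampPath a b x t u s = -b * s + u := by
  rw [le_div_iff₀ (by linarith)] at hs
  have : 0 ≤ -b * s + u := by
    refine (mul_nonneg_iff_of_pos_left (show 0 < a + b by linarith)).1 ?_
    nlinarith
  unfold clampPath
  rw [max_eq_left ((min_le_left 0 _).trans (le_max_of_le_left this)), max_eq_left (by linarith)]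

lemma clampPath_omega1_right (ha : 0 < a) (hb : 0 < b) (h : 0 ≤ a * u + b * x - a * b * t)
    (hs : (-x + u + a * t) / (a + b) ≤ s) : clampPath a b x t u s = a * s + (x - a * t) := by
  rw [div_le_iff₀ (by linarith)] at hs
  have : 0 ≤ a * s + (x - a * t) := by
    refine (mul_nonneg_iff_of_pos_left (show 0 < a + b by linarith)).1 ?_
    nlinarith
  unfold clampPath
  rw [max_eq_left ((min_le_left 0 _).trans (le_max_of_le_right this)), max_eq_right (by linarith)]

lemma clampPath_rest_left (ha : 0 < a) (hb : 0 < b) (hu : u ∈ Icc (x - a * t) (x + b * t))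
    (h : a * (u / b) + x ≤ a * t) (hs : s ≤ u / b) :
    clampPath a b x t u s = -b * s + u := by
  obtain ⟨v, rfl⟩ : ∃ v, u = b * v := ⟨u / b, by field_simp⟩
  rw [mul_div_cancel_left₀ _ hb.ne'] at *
  have e1 := mul_le_mul_of_nonneg_left hs ha.le
  have e2 := mul_le_mul_of_nonneg_left hs hb.le
  have : 0 ≤ -b * s + b * v := by linarith
  unfold clampPath
  rw [max_eq_left ((min_le_left 0 _).trans (le_max_of_le_left this)), max_eq_left (by linarith)]

lemma clampPath_omega2_mid (ha : 0 < a) (hb : 0 < b) (hx : 0 ≤ x) (hu0 : 0 ≤ u) (hs0 : 0 ≤ s)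
    (hst : s ≤ t) (h1 : u / b ≤ s) (h2 : s ≤ t - x / a) : clampPath a b x t u s = 0 := by
  rw [div_le_iff₀ hb] at h1
  rw [le_sub_comm, div_le_iff₀ ha] at h2
  have e1 := mul_nonneg ha.le hs0
  have e2 := mul_nonneg hb.le (sub_nonneg.2 hst)
  unfold clampPath
  rw [min_eq_left (le_min (by linarith) (by linarith)),
    max_eq_right (max_le (by linarith) (by linarith))]

lemma clampPath_omega2_right (ha : 0 < a) (hb : 0 < b) (h : u / b ≤ t - x / a)
    (hs : t - x / a ≤ s) : clampPath a b x t u s = a * s + (x - a * t) := by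
  have h1 := h.trans hs
  rw [div_le_iff₀ hb] at h1
  rw [sub_le_comm, le_div_iff₀ ha] at hs
  have : 0 ≤ a * s + (x - a * t) := by linarith
  unfold clampPath
  rw [max_eq_left ((min_le_left 0 _).trans (le_max_of_le_right this)), max_eq_right (by linarith)]

lemma clampPath_omega3_mid (ha : 0 < a) (hb : 0 < b) (hx : x < 0) (hu0 : 0 ≤ u) (hs0 : 0 ≤ s)
    (hst : s ≤ t) (h1 : u / b ≤ s) (h2 : s ≤ t - |x| / b) : clampPath a b x t u s = 0 := by
  rw [div_le_iff₀ hb] at h1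
  rw [abs_of_neg hx, le_sub_comm, div_le_iff₀ hb] at h2
  have e1 := mul_nonneg ha.le hs0
  have e2 := mul_nonneg ha.le (sub_nonneg.2 hst)
  unfold clampPath
  rw [min_eq_left (le_min (by linarith) (by linarith)),
    max_eq_right (max_le (by linarith) (by linarith))]

lemma clampPath_omega3_right (ha : 0 < a) (hb : 0 < b) (hx : x < 0) (hu0 : 0 ≤ u) (hs0 : 0 ≤ s)
    (hst : s ≤ t) (hu : u ∈ Icc (x - a * t) (x + b * t))
    (hs : t - |x| / b ≤ s) : clampPath a b x t u s = -b * s + (x + b * t) := by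
  rw [abs_of_neg hx, sub_le_comm, le_div_iff₀ hb] at hs
  have e1 := mul_nonneg ha.le hs0
  have e2 := mul_nonneg ha.le (sub_nonneg.2 hst)
  have e3 := mul_nonneg hb.le (sub_nonneg.2 hst)
  obtain ⟨h1, h2⟩ := hu
  unfold clampPath
  rw [min_eq_right (b := -b * s + (x + b * t)) (by linarith), min_eq_right (by linarith),
    max_eq_right (max_le (by linarith) (by linarith))]

end

lemma gammaPos_eq {a b x t u s : ℝ} (ha : 0 < a) (hb : 0 < b) (ht : 0 < t) (hu0 : 0 ≤ u)
    (hu : u ∈ Icc (x - a * t) (x + b * t)) (hs : s ∈ Icc 0 t) :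
    gammaPos a b x t u s = clampPath a b x t u s := by
  rcases omega_cases ha hb ht hu0 hu with ⟨c1, h⟩ | ⟨c1, c2, hx, h⟩ | ⟨c1, c2, c3, hx, h⟩
  · rw [gammaPos, if_pos c1, gamma1]
    split_ifs with h1
    · rw [clampPath_omega1_left ha hb h h1.le]; ring
    · rw [clampPath_omega1_right ha hb h (not_lt.1 h1)]; ring
  · rw [gammaPos, if_neg c1, if_pos c2, gamma2]
    have h' : a * (u / b) + x ≤ a * t := by
      rw [le_sub_comm, div_le_iff₀ ha] at h; linarith
    split_ifs with h1 h2
    · rw [clampPath_rest_left ha hb hu h' h1.le]; ring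
    · rw [clampPath_omega2_mid ha hb hx hu0 hs.1 hs.2 (not_lt.1 h1) h2.le]
    · rw [clampPath_omega2_right ha hb h (not_lt.1 h2)]; ring
  · rw [gammaPos, if_neg c1, if_neg c2, if_pos c3, gamma3]
    have h' : a * (u / b) + x ≤ a * t := by
      have := mul_le_mul_of_nonneg_left c3.2.2.1 ha.le; linarith
    split_ifs with h1 h2
    · rw [clampPath_rest_left ha hb hu h' h1.le]; ring
    · rw [clampPath_omega3_mid ha hb hx hu0 hs.1 hs.2 (not_lt.1 h1) h2.le]
    · rw [clampPath_omega3_right ha hb hx hu0 hs.1 hs.2 hu (not_lt.1 h2)]; ring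

lemma gammaFn_eq {a b x t u s : ℝ} (ha : 0 < a) (hb : 0 < b) (ht : 0 < t)
    (hu : u ∈ Icc (x - a * t) (x + b * t)) (hs : s ∈ Icc 0 t) :
    gammaFn a b x t u s = clampPath a b x t u s := by
  unfold gammaFn
  split_ifs with h0
  · exact gammaPos_eq ha hb ht h0 hu hs
  · rw [gammaPos_eq hb ha ht (by linarith) ⟨by linarith [hu.2], by linarith [hu.1]⟩ hs,
      clampPath_neg ha hb hu hs]

/-! ### The running cost and the value function -/

/-- The running cost of the projected path. -/
def clampCost (a b x t u : ℝ) : ℝ := ∫ s in (0:ℝ)..t, (clampPath a b x t u s) ^ 2 / 2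

lemma integral_affine_sq (m c p q : ℝ) (hm : m ≠ 0) :
    ∫ s in p..q, (m * s + c) ^ 2 / 2 = ((m * q + c) ^ 3 - (m * p + c) ^ 3) / (6 * m) := by
  have hd : ∀ s ∈ uIcc p q, HasDerivAt (fun s => (m * s + c) ^ 3 / (6 * m))
      ((m * s + c) ^ 2 / 2) s := by
    intro s _
    have := ((((hasDerivAt_id' s).const_mul m).add_const c).fun_pow 3).div_const (6 * m)
    refine this.congr_deriv ?_
    push_cast
    field_simp
    norm_num
    ring
  rw [intervalIntegral.integral_eq_sub_of_hasDerivAt hd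
    (Continuous.intervalIntegrable (by fun_prop) _ _)]
  ring

lemma intervalIntegrable_clampPath (a b x t u p q : ℝ) :
    IntervalIntegrable (fun s => (clampPath a b x t u s) ^ 2 / 2) volume p q :=
  (((continuous_clampPath_right a b x t u).pow 2).div_const 2).intervalIntegrable p q

lemma integral_clampPath_of_eq {a b x t u m c p q : ℝ} (hm : m ≠ 0) (hpq : p ≤ q)
    (h : ∀ s ∈ Icc p q, clampPath a b x t u s = m * s + c) :
    ∫ s in p..q, (clampPath a b x t u s) ^ 2 / 2 =
      ((m * q + c) ^ 3 - (m * p + c) ^ 3) / (6 * m) := by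
  rw [← integral_affine_sq m c p q hm]
  refine intervalIntegral.integral_congr fun s hs => ?_
  rw [uIcc_of_le hpq] at hs
  simp only [h s hs]

lemma integral_clampPath_of_zero {a b x t u p q : ℝ} (hpq : p ≤ q)
    (h : ∀ s ∈ Icc p q, clampPath a b x t u s = 0) :
    ∫ s in p..q, (clampPath a b x t u s) ^ 2 / 2 = 0 := by
  rw [← intervalIntegral.integral_zero (a := p) (b := q) (μ := volume)]
  refine intervalIntegral.integral_congr fun s hs => ?_
  rw [uIcc_of_le hpq] at hs
  simp [h s hs]

lemma Vpos_eq {a b x t u : ℝ} (ha : 0 < a) (hb : 0 < b) (ht : 0 < t) (hu0 : 0 ≤ u)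
    (hu : u ∈ Icc (x - a * t) (x + b * t)) :
    Vpos a b x t u = (clampCost a b x t u : EReal) := by
  have hi := fun p q => intervalIntegrable_clampPath a b x t u p q
  have hab : 0 < a + b := by linarith
  unfold clampCost
  rcases omega_cases ha hb ht hu0 hu with ⟨c1, h⟩ | ⟨c1, c2, hx, h⟩ | ⟨c1, c2, c3, hx, h⟩
  · rw [Vpos, if_pos c1, EReal.coe_eq_coe_iff, V1fun,
      ← intervalIntegral.integral_add_adjacent_intervals (hi 0 ((-x + u + a * t) / (a + b)))
        (hi _ t),
      integral_clampPath_of_eq (m := -b) (c := u) (neg_ne_zero.2 hb.ne')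
        (div_nonneg (by linarith [hu.1]) hab.le)
        fun s hs => clampPath_omega1_left ha hb h hs.2,
      integral_clampPath_of_eq (m := a) (c := x - a * t) ha.ne'
        ((div_le_iff₀ hab).2 (by linarith [hu.2]))
        fun s hs => clampPath_omega1_right ha hb h hs.1]
    -- both pieces meet at the common height `(a u + b x - a b t) / (a + b)`
    have e1 : -b * ((-x + u + a * t) / (a + b)) + u = (a * u + b * x - a * b * t) / (a + b) := by
      field_simp; ring
    have e2 : a * ((-x + u + a * t) / (a + b)) + (x - a * t) =
        (a * u + b * x - a * b * t) / (a + b) := by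
      field_simp; ring
    rw [e1, e2]
    field_simp
    ring
  · have h' : a * (u / b) + x ≤ a * t := by
      rw [le_sub_comm, div_le_iff₀ ha] at h; linarith
    have hub : 0 ≤ u / b := div_nonneg hu0 hb.le
    have hxa : t - x / a ≤ t := by linarith [div_nonneg hx ha.le]
    rw [Vpos, if_neg c1, if_pos c2, EReal.coe_eq_coe_iff, V2fun,
      ← intervalIntegral.integral_add_adjacent_intervals (hi 0 (t - x / a)) (hi _ t),
      ← intervalIntegral.integral_add_adjacent_intervals (hi 0 (u / b)) (hi _ (t - x / a)),
      integral_clampPath_of_eq (m := -b) (c := u) (neg_ne_zero.2 hb.ne') hub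
        fun s hs => clampPath_rest_left ha hb hu h' hs.2,
      integral_clampPath_of_zero h fun s hs => clampPath_omega2_mid ha hb hx hu0
        (hub.trans hs.1) (hs.2.trans hxa) hs.1 hs.2,
      integral_clampPath_of_eq (m := a) (c := x - a * t) ha.ne' hxa
        fun s hs => clampPath_omega2_right ha hb h hs.1]
    field_simp
    ring
  · have h' : a * (u / b) + x ≤ a * t := by
      have := mul_le_mul_of_nonneg_left c3.2.2.1 ha.le; linarith
    have hub : 0 ≤ u / b := div_nonneg hu0 hb.le
    have hxb : t - |x| / b ≤ t := by linarith [div_nonneg (abs_nonneg x) hb.le]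
    rw [Vpos, if_neg c1, if_neg c2, if_pos c3, EReal.coe_eq_coe_iff, V3fun,
      ← intervalIntegral.integral_add_adjacent_intervals (hi 0 (t - |x| / b)) (hi _ t),
      ← intervalIntegral.integral_add_adjacent_intervals (hi 0 (u / b)) (hi _ (t - |x| / b)),
      integral_clampPath_of_eq (m := -b) (c := u) (neg_ne_zero.2 hb.ne') hub
        fun s hs => clampPath_rest_left ha hb hu h' hs.2,
      integral_clampPath_of_zero h fun s hs => clampPath_omega3_mid ha hb hx hu0
        (hub.trans hs.1) (hs.2.trans hxb) hs.1 hs.2,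
      integral_clampPath_of_eq (m := -b) (c := x + b * t) (neg_ne_zero.2 hb.ne') hxb
        fun s hs => clampPath_omega3_right ha hb hx hu0 ((hub.trans h).trans hs.1) hs.2 hu hs.1,
      abs_of_neg hx]
    field_simp
    ring

lemma Vval_eq {a b x t u : ℝ} (ha : 0 < a) (hb : 0 < b) (ht : 0 < t)
    (hu : u ∈ Icc (x - a * t) (x + b * t)) :
    Vval a b x t u = (clampCost a b x t u : EReal) := by
  unfold Vval
  split_ifs with h0
  · exact Vpos_eq ha hb ht h0 hu
  · rw [Vpos_eq hb ha ht (by linarith) ⟨by linarith [hu.2], by linarith [hu.1]⟩,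
      EReal.coe_eq_coe_iff]
    refine intervalIntegral.integral_congr fun s hs => ?_
    rw [uIcc_of_le ht.le] at hs
    simp only [← clampPath_neg ha hb hu hs, neg_sq]

lemma continuous_clampCost (a b x t : ℝ) : Continuous (clampCost a b x t) := by
  apply intervalIntegral.continuous_parametric_intervalIntegral_of_continuous'
  exact ((continuous_clampPath a b x t).pow 2).div_const 2

lemma SlopeBdd.intervalIntegrable_sq {a b t : ℝ} {y : ℝ → ℝ} (ht : 0 ≤ t)
    (hy : SlopeBdd a b t y) : IntervalIntegrable (fun s => (y s) ^ 2 / 2) volume 0 t := by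
  apply ContinuousOn.intervalIntegrable
  rw [uIcc_of_le ht]
  obtain ⟨⟨K, hK⟩, _⟩ := hy.ctrlFeasible
  exact (hK.continuousOn.pow 2).div_const 2

/-! ### Optimality and uniqueness -/

/-- Among admissible trajectories with the same initial point, the projected path is cheapest. -/
lemma clampCost_le {a b x t : ℝ} {y : ℝ → ℝ} (ht : 0 ≤ t) (hy : SlopeBdd a b t y)
    (hx : y t = x) : clampCost a b x t (y 0) ≤ ∫ s in (0:ℝ)..t, (y s) ^ 2 / 2 := by
  refine intervalIntegral.integral_mono_on ht (intervalIntegrable_clampPath ..)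
    (hy.intervalIntegrable_sq ht) fun s hs => ?_
  have := sq_le_sq.2 (abs_clampPath_le hy hx hs)
  linarith

/-- The parallelogram law makes the running cost strictly convex, so for convex `Φ` the midpoint of
two distinct trajectories of minimal total cost `m` would be strictly cheaper than `m`. -/
lemma eqOn_of_cost_eq {a b x t m : ℝ} {Φ : ℝ → ℝ} (ht : 0 < t) (hΦ : ConvexOn ℝ univ Φ)
    (hmin : ∀ w : ℝ → ℝ, SlopeBdd a b t w → w t = x →
      m ≤ (∫ s in (0:ℝ)..t, (w s) ^ 2 / 2) + Φ (w 0))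
    {y z : ℝ → ℝ} (hy : SlopeBdd a b t y) (hyx : y t = x) (hz : SlopeBdd a b t z) (hzx : z t = x)
    (hym : (∫ s in (0:ℝ)..t, (y s) ^ 2 / 2) + Φ (y 0) = m)
    (hzm : (∫ s in (0:ℝ)..t, (z s) ^ 2 / 2) + Φ (z 0) = m) :
    ∀ s ∈ Icc 0 t, y s = z s := by
  have hw : SlopeBdd a b t (fun s => (y s + z s) / 2) := by
    intro s hs r hr hsr
    have h1 := hy s hs r hr hsr
    have h2 := hz s hs r hr hsr
    constructor <;> linarith [h1.1, h1.2, h2.1, h2.2]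
  have hyi := hy.intervalIntegrable_sq ht.le
  have hzi := hz.intervalIntegrable_sq ht.le
  have hwi := hw.intervalIntegrable_sq ht.le
  have hΦ' := hΦ.2 (mem_univ (y 0)) (mem_univ (z 0)) (show (0 : ℝ) ≤ 1 / 2 by norm_num)
    (show (0 : ℝ) ≤ 1 / 2 by norm_num) (by norm_num)
  have hw0 : (1 / 2 : ℝ) • y 0 + (1 / 2 : ℝ) • z 0 = (y 0 + z 0) / 2 := by
    simp only [smul_eq_mul]; ring
  rw [hw0] at hΦ'
  simp only [smul_eq_mul] at hΦ'
  have hwm := hmin _ hw (by simp only [hyx, hzx]; ring)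
  have hsq : ∀ s, (y s - z s) ^ 2 / 8 =
      ((y s) ^ 2 / 2 + (z s) ^ 2 / 2) / 2 - ((y s + z s) / 2) ^ 2 / 2 := fun s => by ring
  have hint : ∫ s in (0:ℝ)..t, (y s - z s) ^ 2 / 8 ≤ 0 := by
    simp only [hsq]
    rw [intervalIntegral.integral_sub ((hyi.add hzi).div_const 2) hwi,
      intervalIntegral.integral_div, intervalIntegral.integral_add hyi hzi]
    linarith
  obtain ⟨⟨K, hK⟩, _⟩ := hy.ctrlFeasible
  obtain ⟨⟨L, hL⟩, _⟩ := hz.ctrlFeasible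
  by_contra! hne
  obtain ⟨s, hs, hys⟩ := hne
  have hpos := intervalIntegral.integral_pos (f := fun s => (y s - z s) ^ 2 / 8) ht
    (((hK.continuousOn.sub hL.continuousOn).pow 2).div_const 8)
    (fun r _ => by positivity)
    ⟨s, hs, by have := sub_ne_zero.2 hys; positivity⟩
  linarith

/-- the one-dimensional Lax-Oleinik-type formula.  For lower
semi-continuous `Φ : ℝ → ℝ`, positive `a, b`, `x ∈ ℝ`, `t > 0`:
(i) the infimum of `u ↦ V(x,t;u,a,b) + Φ(u)` over `[x - a*t, x + b*t]` is attained;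
(ii) for any minimizer `u₀`, the trajectory `s ↦ γ(s;x,t,u₀,a,b)` is feasible with
terminal value `x`, minimizes `∫₀ᵗ y(s)²/2 ds + Φ(y 0)` over all feasible `y` with
`y t = x`, and its cost equals `V(x,t) = inf …`;
(iii) if `Φ` is convex, this optimal trajectory is unique. -/
theorem laxOleinik_one_dim (a b x t : ℝ) (ha : 0 < a) (hb : 0 < b) (ht : 0 < t)
    (Φ : ℝ → ℝ) (hΦ : LowerSemicontinuous Φ) :
    -- (i) the minimizer exists
    (∃ u0 ∈ Set.Icc (x - a * t) (x + b * t),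
      ∀ u ∈ Set.Icc (x - a * t) (x + b * t),
        Vval a b x t u0 + (Φ u0 : EReal) ≤ Vval a b x t u + (Φ u : EReal)) ∧
    -- (ii) and (iii)
    (∀ u0 ∈ Set.Icc (x - a * t) (x + b * t),
      (∀ u ∈ Set.Icc (x - a * t) (x + b * t),
        Vval a b x t u0 + (Φ u0 : EReal) ≤ Vval a b x t u + (Φ u : EReal)) →
      -- the trajectory is feasible with terminal position x
      (ctrlFeasible a b t (gammaFn a b x t u0) ∧ gammaFn a b x t u0 t = x) ∧
      -- it minimizes the total cost among feasible trajectories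
      (∀ y : ℝ → ℝ, ctrlFeasible a b t y → y t = x →
        (∫ s in (0:ℝ)..t, (gammaFn a b x t u0 s) ^ 2 / 2) + Φ (gammaFn a b x t u0 0)
          ≤ (∫ s in (0:ℝ)..t, (y s) ^ 2 / 2) + Φ (y 0)) ∧
      -- the minimal cost equals V(x,t)
      ((((∫ s in (0:ℝ)..t, (gammaFn a b x t u0 s) ^ 2 / 2)
            + Φ (gammaFn a b x t u0 0) : ℝ) : EReal)
        = ⨅ u ∈ Set.Icc (x - a * t) (x + b * t), (Vval a b x t u + (Φ u : EReal))) ∧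
      -- (iii) uniqueness of the optimal trajectory when Φ is convex
      (ConvexOn ℝ Set.univ Φ →
        ∀ y : ℝ → ℝ, ctrlFeasible a b t y → y t = x →
          ((∫ s in (0:ℝ)..t, (y s) ^ 2 / 2) + Φ (y 0)
            = (∫ s in (0:ℝ)..t, (gammaFn a b x t u0 s) ^ 2 / 2)
                + Φ (gammaFn a b x t u0 0)) →
          ∀ s ∈ Set.Icc 0 t, y s = gammaFn a b x t u0 s)) := by
  have hV : ∀ u ∈ Icc (x - a * t) (x + b * t), Vval a b x t u + (Φ u : EReal) =
      ((clampCost a b x t u + Φ u : ℝ) : EReal) := fun u hu => by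
    rw [Vval_eq ha hb ht hu, EReal.coe_add]
  constructor
  · have hlsc : LowerSemicontinuousOn (fun u => clampCost a b x t u + Φ u)
        (Icc (x - a * t) (x + b * t)) :=
      ((continuous_clampCost a b x t).lowerSemicontinuous.add hΦ).lowerSemicontinuousOn _
    have hne : (Icc (x - a * t) (x + b * t)).Nonempty :=
      nonempty_Icc.2 (by linarith [mul_pos ha ht, mul_pos hb ht])
    obtain ⟨u0, hu0, hmin⟩ := hlsc.exists_isMinOn hne isCompact_Icc
    refine ⟨u0, hu0, fun u hu => ?_⟩
    rw [hV u0 hu0, hV u hu, EReal.coe_le_coe_iff]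
    exact hmin hu
  intro u0 hu0 hmin
  have hγ : ∀ s ∈ Icc 0 t, gammaFn a b x t u0 s = clampPath a b x t u0 s :=
    fun s hs => gammaFn_eq ha hb ht hu0 hs
  have hγs : SlopeBdd a b t (gammaFn a b x t u0) := (slopeBdd_clampPath ha hb x t u0).congr hγ
  have hγ0 : gammaFn a b x t u0 0 = u0 := by
    rw [hγ 0 ⟨le_rfl, ht.le⟩, clampPath_zero hu0]
  have hγt : gammaFn a b x t u0 t = x := by
    rw [hγ t ⟨ht.le, le_rfl⟩, clampPath_end hu0]
  have hcost : ∫ s in (0:ℝ)..t, (gammaFn a b x t u0 s) ^ 2 / 2 = clampCost a b x t u0 := by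
    refine intervalIntegral.integral_congr fun s hs => ?_
    rw [uIcc_of_le ht.le] at hs
    simp only [hγ s hs]
  have hopt : ∀ y : ℝ → ℝ, SlopeBdd a b t y → y t = x →
      clampCost a b x t u0 + Φ u0 ≤ (∫ s in (0:ℝ)..t, (y s) ^ 2 / 2) + Φ (y 0) := by
    intro y hy hyx
    have hy0 := hy.mem_Icc ht.le hyx
    have h1 := hmin (y 0) hy0
    rw [hV u0 hu0, hV _ hy0, EReal.coe_le_coe_iff] at h1
    linarith [clampCost_le ht.le hy hyx]
  rw [hcost, hγ0]
  refine ⟨⟨hγs.ctrlFeasible, hγt⟩, fun y hy => hopt y hy.slopeBdd, ?_, ?_⟩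
  · rw [← hV u0 hu0]
    exact le_antisymm (le_iInf₂ hmin) (iInf₂_le u0 hu0)
  · intro hconv y hy hyx hyc
    exact eqOn_of_cost_eq ht hconv hopt hy.slopeBdd hyx hγs hγt hyc (by rw [hcost, hγ0])

end
end

section
/- Let a, b, t be positive reals and x, u reals with x ≥ 0, 0 ≤ u ≤ x + bt, and u ≥ x − at. Then for every s ∈ [0,t], γ(s; x,t,u,a,b) = max{u − bs, a(s−t) + x, 0}. -/
/-!
Put `p = u / b` and `q = x / a`. The line `u - b * s` is nonnegative exactly for `s ≤ p`, and
the line `a * (s - t) + x` exactly for `t - q ≤ s`. Under the hypotheses, the dichotomy between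
`Ω₁` and `Ω₂` is the dichotomy `t ≤ p + q` versus `p + q < t`, and `Ω₃` is excluded by `0 ≤ x`.
If `t ≤ p + q`, the two half-lines cover the real line, so the maximum is that of the two lines,
which cross at `(-x + u + a * t) / (a + b)`. If `p + q < t`, both lines are nonpositive on
`[p, t - q]`, and the maximum follows the first line, zero, and the second line in turn.
-/

open Set MeasureTheory Matrix
open scoped Classical

noncomputable section

/-- Under the reachability constraints, `Ω₁` says that the descending line reaches zero no
earlier than the ascending line does. -/
theorem inOmega1_iff {a b t x u : ℝ} (ha : 0 < a) (ht : 0 ≤ t)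
    (hx : 0 ≤ x) (hu0 : 0 ≤ u) (hu1 : u ≤ x + b * t) (hu2 : x - a * t ≤ u) :
    inOmega1 a b x t u ↔ t ≤ u / b + x / a := by
  have hq : 0 ≤ x / a := div_nonneg hx ha.le
  have key : a * t - a * u / b ≤ x ↔ t ≤ u / b + x / a := by
    rw [← sub_le_iff_le_add', le_div_iff₀ ha]
    have : a * t - a * u / b = (t - u / b) * a := by ring
    rw [this]
  constructor
  · rintro ⟨-, -, ⟨h, -⟩ | ⟨-, h, -⟩⟩
    · linarith
    · exact key.1 h
  · intro h
    refine ⟨hu0, ht, ?_⟩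
    rcases lt_or_ge t (u / b) with h1 | h1
    · exact Or.inl ⟨h1, by linarith, by linarith⟩
    · exact Or.inr ⟨h1, key.2 h, by linarith⟩

theorem gamma1_eq_max {a b t x u s : ℝ} (ha : 0 < a) (hb : 0 < b)
    (h : t ≤ u / b + x / a) :
    gamma1 a b x t u s = max (max (u - b * s) (a * (s - t) + x)) 0 := by
  have hnn : 0 ≤ max (u - b * s) (a * (s - t) + x) := by
    rcases le_total s (u / b) with h1 | h1
    · rw [le_div_iff₀ hb] at h1
      exact le_max_of_le_left (by linarith)
    · have h2 : t - s ≤ x / a := by linarith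
      rw [le_div_iff₀ ha] at h2
      exact le_max_of_le_right (by linarith)
  rw [max_eq_left hnn, gamma1]
  split_ifs with h1
  · rw [lt_div_iff₀ (by positivity)] at h1
    exact (max_eq_left (by linarith)).symm
  · rw [not_lt, div_le_iff₀ (by positivity)] at h1
    exact (max_eq_right (by linarith)).symm

theorem gamma2_eq_max {a b t x u s : ℝ} (ha : 0 < a) (hb : 0 < b)
    (h : u / b + x / a < t) :
    gamma2 a b x t u s = max (max (u - b * s) (a * (s - t) + x)) 0 := by
  have first : 0 < u - b * s ↔ s < u / b := by
    rw [lt_div_iff₀ hb, sub_pos, mul_comm]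
  have second : a * (s - t) + x < 0 ↔ s < t - x / a := by
    rw [lt_sub_comm, div_lt_iff₀ ha]
    constructor <;> intro h <;> linarith
  rw [gamma2]
  split_ifs with h1 h2
  · have hf := first.2 h1
    have hs := second.2 (by linarith)
    rw [max_eq_left (a := u - b * s) (by linarith), max_eq_left hf.le]
  · have hf := not_lt.1 (mt first.1 h1)
    have hs := second.2 h2
    rw [max_eq_right (max_le hf hs.le)]
  · have hf := not_lt.1 (mt first.1 h1)
    have hs := not_lt.1 (mt second.1 h2)
    rw [max_eq_right (a := u - b * s) (by linarith), max_eq_left hs]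

/-- the max expression for the trajectory.  For positive `a, b, t` and
reals `x, u` with `x ≥ 0`, `0 ≤ u ≤ x + b*t` and `u ≥ x - a*t`, for every `s ∈ [0,t]`,
`γ(s;x,t,u,a,b) = max{u - b*s, a*(s-t) + x, 0}`. -/
theorem gamma_eq_max (a b t x u : ℝ) (ha : 0 < a) (hb : 0 < b) (ht : 0 < t)
    (hx : 0 ≤ x) (hu0 : 0 ≤ u) (hu1 : u ≤ x + b * t) (hu2 : x - a * t ≤ u) :
    ∀ s ∈ Set.Icc 0 t,
      gammaFn a b x t u s = max (max (u - b * s) (a * (s - t) + x)) 0 := by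
  intro s _
  have hΩ₁ := inOmega1_iff ha ht.le hx hu0 hu1 hu2
  rw [gammaFn, if_pos hu0, gammaPos]
  rcases le_or_gt t (u / b + x / a) with h | h
  · rw [if_pos (hΩ₁.2 h), gamma1_eq_max ha hb h]
  · have hq : 0 ≤ x / a := div_nonneg hx ha.le
    have hΩ₂ : inOmega2 a b x t u := by
      refine ⟨hu0, ht.le, by linarith, hx, ?_⟩
      have h' : x / a < t - u / b := by linarith
      rw [div_lt_iff₀ ha] at h'
      calc x < (t - u / b) * a := h'
        _ = a * t - a * u / b := by ring
    rw [if_neg (mt hΩ₁.1 h.not_ge), if_pos hΩ₂, gamma2_eq_max ha hb h]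

end
end
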